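/- Let n ≥ 1, s, s̃ ∈ ℝ, 0 < p < ∞ and 0 < q, r ≤ ∞ satisfy s > s̃ and s/n + 1/q = s̃/n + 1/p. Then there exists a constant C such that for every measurable function f on ℝⁿ, ‖f‖_{L^{p,r}_{s̃}} ≤ C·‖f‖_{K̇^s_{q,r}}; that is, the Herz space K̇^s_{q,r}(ℝⁿ) embeds continuously into the power-weighted Lorentz space L^{p,r}_{s̃}(ℝⁿ). -/

import Mathlib

open MeasureTheory Set ENNReal Filter

noncomputable section

abbrev Euc (n : ℕ) : Type := EuclideanSpace ℝ (Fin n)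

def annulus (n : ℕ) (j : ℤ) : Set (Euc n) :=
  {x : Euc n | (2 : ℝ) ^ (j - 1) ≤ ‖x‖ ∧ ‖x‖ < (2 : ℝ) ^ j}

def herzNorm (n : ℕ) (s : ℝ) (q r : ℝ≥0∞) (f : Euc n → ℝ) : ℝ≥0∞ :=
  if r = ⊤ then
    ⨆ j : ℤ, ENNReal.ofReal ((2 : ℝ) ^ ((j : ℝ) * s)) *
      eLpNorm ((annulus n j).indicator f) q volume
  else
    (∑' j : ℤ, (ENNReal.ofReal ((2 : ℝ) ^ ((j : ℝ) * s)) *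
      eLpNorm ((annulus n j).indicator f) q volume) ^ r.toReal) ^ (1 / r.toReal)

/-- The decreasing rearrangement `f*(t) = inf {λ > 0 : |{x : |f x| > λ}| ≤ t}`. -/
def decRearrangement (n : ℕ) (f : Euc n → ℝ) (t : ℝ) : ℝ≥0∞ :=
  sInf {l : ℝ≥0∞ | 0 < l ∧ volume {x : Euc n | l < (‖f x‖₊ : ℝ≥0∞)} ≤ ENNReal.ofReal t}

/-- The Lorentz quasi-norm `‖f‖_{L^{p,r}}`. -/
def lorentzNorm (n : ℕ) (p : ℝ) (r : ℝ≥0∞) (f : Euc n → ℝ) : ℝ≥0∞ :=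
  if r = ⊤ then
    ⨆ (t : ℝ) (_ : 0 < t), ENNReal.ofReal (t ^ (1 / p)) * decRearrangement n f t
  else
    (∫⁻ t in Set.Ioi (0 : ℝ),
      (ENNReal.ofReal (t ^ (1 / p)) * decRearrangement n f t) ^ r.toReal *
        ENNReal.ofReal t⁻¹) ^ (1 / r.toReal)

/-- The power-weighted Lorentz quasi-norm `‖f‖_{L^{p,r}_{s}} = ‖|·|^s f‖_{L^{p,r}}`. -/
def lorentzNormW (n : ℕ) (s : ℝ) (p : ℝ) (r : ℝ≥0∞) (f : Euc n → ℝ) : ℝ≥0∞ :=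
  lorentzNorm n p r (fun x => ‖x‖ ^ s * f x)

/-- `2^x` as an extended nonnegative real. -/
def pw (x : ℝ) : ℝ≥0∞ := ENNReal.ofReal ((2 : ℝ) ^ x)

lemma pw_add (x y : ℝ) : pw (x + y) = pw x * pw y := by
  rw [pw, pw, pw, Real.rpow_add (by norm_num), ENNReal.ofReal_mul (by positivity)]

lemma pw_zero : pw 0 = 1 := by simp [pw]

lemma pw_ne_zero (x : ℝ) : pw x ≠ 0 := by
  have : (0 : ℝ) < 2 ^ x := by positivity
  simpa [pw] using this

lemma pw_ne_top (x : ℝ) : pw x ≠ ⊤ := ENNReal.ofReal_ne_top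

lemma pw_rpow (x y : ℝ) : pw x ^ y = pw (x * y) := by
  rw [pw, pw, ENNReal.ofReal_rpow_of_pos (by positivity), Real.rpow_mul (by norm_num)]

lemma pw_pow (x : ℝ) (m : ℕ) : pw x ^ m = pw (x * m) := by
  rw [← pw_rpow, ENNReal.rpow_natCast]

lemma pw_mono {x y : ℝ} (h : x ≤ y) : pw x ≤ pw y :=
  ENNReal.ofReal_le_ofReal (Real.rpow_le_rpow_of_exponent_le (by norm_num) h)

lemma pw_lt_one {x : ℝ} (h : x < 0) : pw x < 1 := by
  rw [pw, ENNReal.ofReal_lt_one]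
  exact Real.rpow_lt_one_of_one_lt_of_neg (by norm_num) h

lemma pw_cancel (x : ℝ) (a : ℝ≥0∞) : pw (-x) * (pw x * a) = a := by
  rw [← mul_assoc, ← pw_add, neg_add_cancel, pw_zero, one_mul]

/-- The terms of the Herz sequence. -/
def herzTerm (n : ℕ) (s : ℝ) (q : ℝ≥0∞) (f : Euc n → ℝ) (j : ℤ) : ℝ≥0∞ :=
  pw ((j : ℝ) * s) * eLpNorm ((annulus n j).indicator f) q volume

lemma measurableSet_annulus (n : ℕ) (j : ℤ) : MeasurableSet (annulus n j) :=
  (measurableSet_le measurable_const measurable_norm).inter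
    (measurableSet_lt measurable_norm measurable_const)

lemma weight_le (n : ℕ) (st : ℝ) (j : ℤ) (x : Euc n) (hx : x ∈ annulus n j) :
    ‖x‖ ^ st ≤ (2 : ℝ) ^ ((j : ℝ) * st + |st|) := by
  obtain ⟨h1, h2⟩ := hx
  have h0 : (0 : ℝ) < 2 ^ (j - 1) := by positivity
  rcases le_total 0 st with h | h
  · calc ‖x‖ ^ st ≤ ((2 : ℝ) ^ j) ^ st := Real.rpow_le_rpow (norm_nonneg _) h2.le h
      _ = (2 : ℝ) ^ ((j : ℝ) * st) := by
        rw [← Real.rpow_intCast, ← Real.rpow_mul (by norm_num)]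
      _ ≤ _ := Real.rpow_le_rpow_of_exponent_le (by norm_num) (by linarith [abs_nonneg st])
  · calc ‖x‖ ^ st ≤ ((2 : ℝ) ^ (j - 1)) ^ st := Real.rpow_le_rpow_of_nonpos h0 h1 h
      _ = (2 : ℝ) ^ (((j : ℝ) - 1) * st) := by
        rw [← Real.rpow_intCast, ← Real.rpow_mul (by norm_num)]; push_cast; rfl
      _ ≤ _ := Real.rpow_le_rpow_of_exponent_le (by norm_num) (by rw [abs_of_nonpos h]; linarith)

lemma level_bound (n : ℕ) (hn : 1 ≤ n) (s st p : ℝ) (q : ℝ≥0∞)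
    (hp : 0 < p) (hq : 0 < q) (hss : st < s)
    (he : s / (n : ℝ) + (q⁻¹).toReal = st / (n : ℝ) + 1 / p) :
    ∃ θ : ℝ≥0∞, θ < 1 ∧ ∀ f : Euc n → ℝ, Measurable f → ∀ (k : ℤ) (m : ℕ) (l : ℝ≥0∞),
      l ≠ 0 → l ≠ ⊤ →
      herzTerm n s q f (k + m) ≤ pw (k * (n / p) + m * ((s - st) / 2) - |st|) * l →
      volume {x : Euc n | x ∈ annulus n (k + m) ∧ l < (‖‖x‖ ^ st * f x‖₊ : ℝ≥0∞)} ≤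
        pw (k * n) * θ ^ m := by
  have hn' : (0 : ℝ) < n := by exact_mod_cast hn
  have he' : n / p - (s - st) = n * (q⁻¹).toReal := by
    field_simp at he ⊢
    linarith
  have key : ∀ f : Euc n → ℝ, Measurable f → ∀ (k : ℤ) (m : ℕ) (l : ℝ≥0∞),
      l ≠ 0 → l ≠ ⊤ →
      herzTerm n s q f (k + m) ≤ pw (k * (n / p) + m * ((s - st) / 2) - |st|) * l →
      ∃ T : ℝ≥0∞, T ≠ 0 ∧ T ≠ ⊤ ∧
      volume {x : Euc n | x ∈ annulus n (k + m) ∧ l < (‖‖x‖ ^ st * f x‖₊ : ℝ≥0∞)} ≤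
        volume {x : Euc n | T < ‖(annulus n (k + m)).indicator f x‖ₑ} ∧
      eLpNorm ((annulus n (k + m)).indicator f) q volume ≤
        pw (k * (n * (q⁻¹).toReal) - m * ((s - st) / 2)) * T := by
    intro f hf k m l hl0 hlt h
    refine ⟨pw (-(((k + m : ℤ) : ℝ) * st + |st|)) * l, mul_ne_zero (pw_ne_zero _) hl0,
      ENNReal.mul_ne_top (pw_ne_top _) hlt, measure_mono ?_, ?_⟩
    · rintro x ⟨hx, hxl⟩
      simp only [mem_ofPred_eq, indicator_of_mem hx]
      have h1 : (‖‖x‖ ^ st * f x‖₊ : ℝ≥0∞) ≤ pw (((k + m : ℤ) : ℝ) * st + |st|) * ‖f x‖ₑ := by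
        rw [← enorm_eq_nnnorm, enorm_mul]
        gcongr
        rw [Real.enorm_of_nonneg (by positivity)]
        exact ENNReal.ofReal_le_ofReal (weight_le n st _ x hx)
      have h2 := hxl.trans_le h1
      have h3 := ENNReal.mul_lt_mul_right (pw_ne_zero (-(((k + m : ℤ) : ℝ) * st + |st|)))
        (pw_ne_top _) h2
      rwa [pw_cancel] at h3
    · have h3 := mul_le_mul_right h (pw (-(((k + m : ℤ) : ℝ) * s)))
      rw [herzTerm, pw_cancel, ← mul_assoc, ← pw_add] at h3
      refine h3.trans (le_of_eq ?_)
      rw [← mul_assoc, ← pw_add, ← he']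
      congr 2
      push_cast
      ring
  by_cases hqt : q = ⊤
  · subst hqt
    refine ⟨1 / 2, by simp, fun f hf k m l hl0 hlt h => ?_⟩
    obtain ⟨T, hT0, hTt, hv, hE⟩ := key f hf k m l hl0 hlt h
    refine hv.trans ?_
    have hE2 : eLpNormEssSup ((annulus n (k + m)).indicator f) volume ≤ T := by
      rw [eLpNorm_exponent_top] at hE
      refine hE.trans ?_
      have : pw (k * (n * ((⊤ : ℝ≥0∞)⁻¹).toReal) - m * ((s - st) / 2)) ≤ 1 := by
        rw [← pw_zero]
        apply pw_mono
        have : 0 ≤ (m : ℝ) * ((s - st) / 2) := by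
          apply mul_nonneg (by positivity); linarith
        simp
        linarith
      calc _ ≤ 1 * T := by gcongr
        _ = T := one_mul _
    have : volume {x : Euc n | T < ‖(annulus n (k + m)).indicator f x‖ₑ} = 0 := by
      have h0 := enorm_ae_le_eLpNormEssSup ((annulus n (k + m)).indicator f) volume
      rw [ae_iff] at h0
      refine measure_mono_null ?_ h0
      intro x hx
      simp only [mem_ofPred_eq, not_le] at hx ⊢
      exact hE2.trans_lt hx
    rw [this]
    exact zero_le
  · have hq0 : 0 < q.toReal := ENNReal.toReal_pos hq.ne' hqt
    refine ⟨pw (-((s - st) / 2 * q.toReal)), pw_lt_one ?_, fun f hf k m l hl0 hlt h => ?_⟩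
    · have : 0 < (s - st) / 2 * q.toReal := mul_pos (by linarith) hq0
      linarith
    obtain ⟨T, hT0, hTt, hv, hE⟩ := key f hf k m l hl0 hlt h
    have hM := mul_meas_ge_le_pow_eLpNorm' volume hq.ne' hqt
      ((hf.indicator (measurableSet_annulus n (k + m))).aestronglyMeasurable) T
    have hT : T ^ q.toReal * volume {x : Euc n | T ≤ ‖(annulus n (k + m)).indicator f x‖ₑ} ≤
        T ^ q.toReal * (pw (k * n) * pw (-((s - st) / 2 * q.toReal)) ^ m) := by
      refine hM.trans ((ENNReal.rpow_le_rpow hE hq0.le).trans (le_of_eq ?_))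
      rw [ENNReal.mul_rpow_of_nonneg _ _ hq0.le, mul_comm, pw_rpow, pw_pow, ← pw_add,
        ENNReal.toReal_inv]
      congr 2
      field_simp
      ring
    have hT' := (ENNReal.mul_le_mul_iff_right (by simp [hT0, hTt]) (by simp [hT0, hTt])).1 hT
    refine hv.trans (le_trans (measure_mono ?_) hT')
    intro x hx
    exact (le_of_lt hx : T ≤ _)

lemma dec_bound (n : ℕ) (hn : 1 ≤ n) (s st p : ℝ) (q : ℝ≥0∞)
    (hp : 0 < p) (hq : 0 < q) (hss : st < s)
    (he : s / (n : ℝ) + (q⁻¹).toReal = st / (n : ℝ) + 1 / p) :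
    ∃ D : ℝ, 0 < D ∧ ∀ f : Euc n → ℝ, Measurable f → ∀ k : ℤ,
      decRearrangement n (fun x => ‖x‖ ^ st * f x) (D * (2 : ℝ) ^ ((k : ℝ) * n)) ≤
        pw (|st| - k * (n / p)) *
          ⨆ m : ℕ, pw (-(m * ((s - st) / 2))) * herzTerm n s q f (k + m) := by
  obtain ⟨θ, hθ, H⟩ := level_bound n hn s st p q hp hq hss he
  have : Nonempty (Fin n) := ⟨⟨0, hn⟩⟩
  set ω : ℝ≥0∞ := volume (Metric.ball (0 : Euc n) 1) with hω
  have hωt : ω ≠ ⊤ := measure_ball_lt_top.ne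
  have hθ' : (1 - θ)⁻¹ ≠ ⊤ := ENNReal.inv_ne_top.2 (tsub_pos_of_lt hθ).ne'
  have hDt : ω + (1 - θ)⁻¹ ≠ ⊤ := ENNReal.add_ne_top.2 ⟨hωt, hθ'⟩
  refine ⟨(ω + (1 - θ)⁻¹).toReal, ENNReal.toReal_pos ?_ hDt, fun f hf k => ?_⟩
  · simp only [ne_eq, add_eq_zero, not_and]
    intro _
    simp
  set M : ℝ≥0∞ := pw (|st| - k * (n / p)) *
          ⨆ m : ℕ, pw (-(m * ((s - st) / 2))) * herzTerm n s q f (k + m) with hM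
  apply ENNReal.le_of_forall_pos_le_add
  intro ε hε hMt
  have hl0 : M + ε ≠ 0 := by
    simp only [ne_eq, add_eq_zero, not_and]; intro _; simpa using hε.ne'
  have hlt : M + ε ≠ ⊤ := ENNReal.add_ne_top.2 ⟨hMt.ne, ENNReal.coe_ne_top⟩
  apply sInf_le
  refine ⟨pos_iff_ne_zero.2 hl0, ?_⟩
  have hcover : {x : Euc n | M + ε < (‖‖x‖ ^ st * f x‖₊ : ℝ≥0∞)} ⊆
      Metric.ball 0 ((2 : ℝ) ^ k) ∪ ⋃ m : ℕ,
        {x : Euc n | x ∈ annulus n (k + m) ∧ M + ε < (‖‖x‖ ^ st * f x‖₊ : ℝ≥0∞)} := by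
    intro x hx
    by_cases hxk : ‖x‖ < (2 : ℝ) ^ k
    · left; simpa using hxk
    · right
      push Not at hxk
      have hx0 : 0 < ‖x‖ := lt_of_lt_of_le (by positivity) hxk
      obtain ⟨i, hi1, hi2⟩ := exists_mem_Ico_zpow hx0 (one_lt_two : (1 : ℝ) < 2)
      have hki : k < i + 1 := (zpow_lt_zpow_iff_right₀ (one_lt_two : (1 : ℝ) < 2)).1
        (hxk.trans_lt hi2)
      obtain ⟨m, hm⟩ := Int.le.dest (show k ≤ i + 1 by omega)
      refine mem_iUnion.2 ⟨m, ?_, hx⟩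
      rw [hm]
      exact ⟨by simpa using hi1, hi2⟩
  refine (measure_mono hcover).trans ((measure_union_le _ _).trans ?_)
  have hball : volume (Metric.ball (0 : Euc n) ((2 : ℝ) ^ k)) = pw (k * n) * ω := by
    rw [Measure.addHaar_ball _ _ (by positivity), finrank_euclideanSpace_fin, pw, Real.rpow_mul
      (by norm_num), Real.rpow_intCast, Real.rpow_natCast]
  have hun : volume (⋃ m : ℕ,
        {x : Euc n | x ∈ annulus n (k + m) ∧ M + ε < (‖‖x‖ ^ st * f x‖₊ : ℝ≥0∞)}) ≤
      pw (k * n) * (1 - θ)⁻¹ := by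
    refine (measure_iUnion_le _).trans ?_
    rw [← ENNReal.tsum_geometric, ← ENNReal.tsum_mul_left]
    refine ENNReal.tsum_le_tsum fun m => H f hf k m _ hl0 hlt ?_
    have h1 : pw (|st| - k * (n / p)) * (pw (-(m * ((s - st) / 2))) * herzTerm n s q f (k + m))
        ≤ M + ε := by
      refine le_trans ?_ le_self_add
      rw [hM]
      gcongr
      exact le_iSup (fun m : ℕ => pw (-(m * ((s - st) / 2))) * herzTerm n s q f (k + m)) m
    calc herzTerm n s q f (k + m)
        = pw (k * (n / p) + m * ((s - st) / 2) - |st|) *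
          (pw (|st| - k * (n / p)) * (pw (-(m * ((s - st) / 2))) * herzTerm n s q f (k + m))) := by
          rw [← mul_assoc, ← mul_assoc, ← pw_add, ← pw_add]
          ring_nf
          rw [pw_zero, one_mul]
      _ ≤ _ := by gcongr
  calc _ ≤ pw (k * n) * ω + pw (k * n) * (1 - θ)⁻¹ := by rw [hball]; gcongr
    _ = _ := by
      rw [ENNReal.ofReal_mul ENNReal.toReal_nonneg, ENNReal.ofReal_toReal hDt, ← mul_add, mul_comm]
      rfl

lemma dec_antitone (n : ℕ) (g : Euc n → ℝ) {t u : ℝ} (h : t ≤ u) :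
    decRearrangement n g u ≤ decRearrangement n g t :=
  sInf_le_sInf fun _ hl => ⟨hl.1, hl.2.trans (ENNReal.ofReal_le_ofReal h)⟩

lemma exists_scale (n : ℕ) (hn : 1 ≤ n) (D t : ℝ) (hD : 0 < D) (ht : 0 < t) :
    ∃ k : ℤ, t ∈ Ico (D * (2 : ℝ) ^ ((k : ℝ) * n)) (D * (2 : ℝ) ^ (((k : ℝ) + 1) * n)) := by
  have h2 : (1 : ℝ) < (2 : ℝ) ^ n := one_lt_pow₀ (by norm_num) (Nat.one_le_iff_ne_zero.1 hn)
  obtain ⟨k, h1, h3⟩ := exists_mem_Ico_zpow (div_pos ht hD) h2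
  have e : ∀ i : ℤ, ((2 : ℝ) ^ n) ^ i = (2 : ℝ) ^ ((i : ℝ) * n) := by
    intro i
    rw [mul_comm, Real.rpow_mul (by norm_num), Real.rpow_intCast, Real.rpow_natCast]
  rw [e] at h1 h3
  refine ⟨k, ?_, ?_⟩
  · rwa [le_div_iff₀' hD] at h1
  · rw [div_lt_iff₀' hD] at h3
    push_cast at h3
    exact h3

lemma lorentz_of_dec (n : ℕ) (hn : 1 ≤ n) (p ε D c : ℝ) (r : ℝ≥0∞)
    (hp : 0 < p) (hr : 0 < r) (hε : 0 < ε) (hD : 0 < D) :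
    ∃ C : ℝ, 0 < C ∧ ∀ (g : Euc n → ℝ) (a : ℤ → ℝ≥0∞),
      (∀ k : ℤ, decRearrangement n g (D * (2 : ℝ) ^ ((k : ℝ) * n)) ≤
        pw (c - k * (n / p)) * ⨆ m : ℕ, pw (-(m * ε)) * a (k + m)) →
      lorentzNorm n p r g ≤ ENNReal.ofReal C *
        (if r = ⊤ then ⨆ j : ℤ, a j else (∑' j : ℤ, a j ^ r.toReal) ^ (1 / r.toReal)) := by
  set C1 : ℝ≥0∞ := ENNReal.ofReal (D ^ (1 / p)) * pw (n / p + c) with hC1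
  have hC1t : C1 ≠ ⊤ := ENNReal.mul_ne_top ENNReal.ofReal_ne_top (pw_ne_top _)
  have hC10 : C1 ≠ 0 := by
    refine mul_ne_zero ?_ (pw_ne_zero _)
    have : 0 < D ^ (1 / p) := by positivity
    simpa using this
  have key : ∀ (g : Euc n → ℝ) (a : ℤ → ℝ≥0∞),
      (∀ k : ℤ, decRearrangement n g (D * (2 : ℝ) ^ ((k : ℝ) * n)) ≤
        pw (c - k * (n / p)) * ⨆ m : ℕ, pw (-(m * ε)) * a (k + m)) →
      ∀ (k : ℤ), ∀ t ∈ Ico (D * (2 : ℝ) ^ ((k : ℝ) * n)) (D * (2 : ℝ) ^ (((k : ℝ) + 1) * n)),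
      ENNReal.ofReal (t ^ (1 / p)) * decRearrangement n g t ≤
        C1 * ⨆ m : ℕ, pw (-(m * ε)) * a (k + m) := by
    intro g a h k t ht
    have ht0 : 0 < t := lt_of_lt_of_le (by positivity) ht.1
    have h1 := (dec_antitone n g ht.1).trans (h k)
    have h2 : ENNReal.ofReal (t ^ (1 / p)) ≤
        ENNReal.ofReal (D ^ (1 / p)) * pw (((k : ℝ) + 1) * n * (1 / p)) := by
      rw [pw, ← ENNReal.ofReal_mul (by positivity), Real.rpow_mul (by norm_num),
        ← Real.mul_rpow hD.le (by positivity)]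
      exact ENNReal.ofReal_le_ofReal (Real.rpow_le_rpow ht0.le ht.2.le (by positivity))
    refine (mul_le_mul' h2 h1).trans (le_of_eq ?_)
    rw [hC1, ← mul_assoc, mul_assoc (ENNReal.ofReal _), ← pw_add]
    congr 3
    ring
  by_cases hrt : r = ⊤
  · refine ⟨C1.toReal, ENNReal.toReal_pos hC10 hC1t, fun g a h => ?_⟩
    rw [lorentzNorm, if_pos hrt, if_pos hrt, ENNReal.ofReal_toReal hC1t]
    refine iSup₂_le fun t ht => ?_
    obtain ⟨k, hk⟩ := exists_scale n hn D t hD ht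
    refine (key g a h k t hk).trans ?_
    gcongr
    refine iSup_le fun m => ?_
    calc _ ≤ 1 * a (k + m) := by
          gcongr
          rw [← pw_zero]
          apply pw_mono
          have : 0 ≤ m * ε := by positivity
          linarith
      _ ≤ _ := by rw [one_mul]; exact le_iSup a _
  · have hr0 : 0 < r.toReal := ENNReal.toReal_pos hr.ne' hrt
    set ρ := r.toReal with hρ
    set S : ℝ≥0∞ := (1 - pw (-(ε * ρ)))⁻¹ with hS
    have hlt1 : pw (-(ε * ρ)) < 1 := pw_lt_one (by have := mul_pos hε hr0; linarith)
    have hSt : S ≠ ⊤ := ENNReal.inv_ne_top.2 (tsub_pos_of_lt hlt1).ne'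
    have hS0 : S ≠ 0 := by simp [hS]
    set K : ℝ≥0∞ := pw n * C1 ^ ρ * S with hK
    have hKt : K ≠ ⊤ := ENNReal.mul_ne_top (ENNReal.mul_ne_top (pw_ne_top _)
      (ENNReal.rpow_ne_top_of_nonneg hr0.le hC1t)) hSt
    have hK0 : K ≠ 0 := mul_ne_zero (mul_ne_zero (pw_ne_zero _) (by simp [hC10, hC1t])) hS0
    have hKt' : K ^ (1 / ρ) ≠ ⊤ := ENNReal.rpow_ne_top_of_nonneg (by positivity) hKt
    refine ⟨(K ^ (1 / ρ)).toReal, ENNReal.toReal_pos (by simp [hK0, hKt]) hKt', fun g a h => ?_⟩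
    rw [lorentzNorm, if_neg hrt, if_neg hrt, ENNReal.ofReal_toReal hKt',
      ← ENNReal.mul_rpow_of_nonneg _ _ (by positivity)]
    apply ENNReal.rpow_le_rpow _ (by positivity)
    have hsub : Ioi (0 : ℝ) ⊆ ⋃ k : ℤ,
        Ico (D * (2 : ℝ) ^ ((k : ℝ) * n)) (D * (2 : ℝ) ^ (((k : ℝ) + 1) * n)) :=
      fun t ht => mem_iUnion.2 (exists_scale n hn D t hD ht)
    refine (lintegral_mono_set hsub).trans ((lintegral_iUnion_le _ _).trans ?_)
    have hpiece : ∀ k : ℤ,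
        ∫⁻ t in Ico (D * (2 : ℝ) ^ ((k : ℝ) * n)) (D * (2 : ℝ) ^ (((k : ℝ) + 1) * n)),
          (ENNReal.ofReal (t ^ (1 / p)) * decRearrangement n g t) ^ ρ * ENNReal.ofReal t⁻¹ ≤
        pw n * C1 ^ ρ * ∑' m : ℕ, pw (-(ε * ρ)) ^ m * a (k + m) ^ ρ := by
      intro k
      have hsup : (⨆ m : ℕ, pw (-(m * ε)) * a (k + m)) ^ ρ ≤
          ∑' m : ℕ, pw (-(ε * ρ)) ^ m * a (k + m) ^ ρ := by
        rw [← ENNReal.le_rpow_inv_iff hr0]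
        refine iSup_le fun m => ?_
        rw [ENNReal.le_rpow_inv_iff hr0]
        refine le_trans (le_of_eq ?_)
          (ENNReal.le_tsum (f := fun m : ℕ => pw (-(ε * ρ)) ^ m * a (k + m) ^ ρ) m)
        rw [ENNReal.mul_rpow_of_nonneg _ _ hr0.le, pw_rpow, pw_pow]
        congr 2
        ring
      have hpos : 0 < D * (2 : ℝ) ^ ((k : ℝ) * n) := by positivity
      calc _ ≤ ∫⁻ t in Ico (D * (2 : ℝ) ^ ((k : ℝ) * n)) (D * (2 : ℝ) ^ (((k : ℝ) + 1) * n)),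
            (C1 ^ ρ * ∑' m : ℕ, pw (-(ε * ρ)) ^ m * a (k + m) ^ ρ) *
              ENNReal.ofReal (D * (2 : ℝ) ^ ((k : ℝ) * n))⁻¹ := by
            refine setLIntegral_mono' measurableSet_Ico fun t ht => ?_
            refine mul_le_mul' ?_ (ENNReal.ofReal_le_ofReal (inv_anti₀ hpos ht.1))
            refine (ENNReal.rpow_le_rpow (key g a h k t ht) hr0.le).trans ?_
            rw [ENNReal.mul_rpow_of_nonneg _ _ hr0.le]
            gcongr
        _ = (C1 ^ ρ * ∑' m : ℕ, pw (-(ε * ρ)) ^ m * a (k + m) ^ ρ) *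
            (ENNReal.ofReal (D * (2 : ℝ) ^ ((k : ℝ) * n))⁻¹ * ENNReal.ofReal
              (D * (2 : ℝ) ^ (((k : ℝ) + 1) * n) - D * (2 : ℝ) ^ ((k : ℝ) * n))) := by
            rw [setLIntegral_const, Real.volume_Ico, mul_assoc]
        _ ≤ (C1 ^ ρ * ∑' m : ℕ, pw (-(ε * ρ)) ^ m * a (k + m) ^ ρ) * pw n := by
            gcongr
            rw [← ENNReal.ofReal_mul (by positivity), pw]
            apply ENNReal.ofReal_le_ofReal
            rw [inv_mul_le_iff₀ hpos, add_mul, one_mul, Real.rpow_add (by norm_num)]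
            linarith
        _ = _ := by ring
    refine (ENNReal.tsum_le_tsum hpiece).trans (le_of_eq ?_)
    rw [ENNReal.tsum_mul_left, ENNReal.tsum_comm, hK, mul_assoc (pw n * C1 ^ ρ)]
    congr 1
    have : ∀ m : ℕ, ∑' k : ℤ, pw (-(ε * ρ)) ^ m * a (k + m) ^ ρ =
        pw (-(ε * ρ)) ^ m * ∑' j : ℤ, a j ^ ρ := by
      intro m
      rw [ENNReal.tsum_mul_left]
      congr 1
      exact (Equiv.addRight (m : ℤ)).tsum_eq (fun j => a j ^ ρ)
    simp_rw [this]
    rw [ENNReal.tsum_mul_right, ENNReal.tsum_geometric]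

/-- If `s > s̃` and `s/n + 1/q = s̃/n + 1/p`, the Herz space `K̇^s_{q,r}(ℝⁿ)` embeds
continuously into the power-weighted Lorentz space `L^{p,r}_{s̃}(ℝⁿ)`. -/
theorem herz_embeds_lorentz
    (n : ℕ) (hn : 1 ≤ n) (s st p : ℝ) (q r : ℝ≥0∞)
    (hp : 0 < p) (hq : 0 < q) (hr : 0 < r)
    (hss : st < s)
    (he : s / (n : ℝ) + (q⁻¹).toReal = st / (n : ℝ) + 1 / p) :
    ∃ C : ℝ, 0 < C ∧ ∀ f : Euc n → ℝ, Measurable f →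
      lorentzNormW n st p r f ≤ ENNReal.ofReal C * herzNorm n s q r f := by
  obtain ⟨D, hD, H⟩ := dec_bound n hn s st p q hp hq hss he
  obtain ⟨C, hC, H2⟩ := lorentz_of_dec n hn p ((s - st) / 2) D |st| r hp hr (by linarith) hD
  refine ⟨C, hC, fun f hf => ?_⟩
  have := H2 (fun x => ‖x‖ ^ st * f x) (herzTerm n s q f) (H f hf)
  refine this.trans (le_of_eq ?_)
  simp only [herzNorm, herzTerm, pw]
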